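/- There exist constants c, C > 0 such that for every function f holomorphic on the open square D = {z ∈ ℂ : 0 < Re z < 1 and |Im z| < min(Re z, 1 − Re z)} with ∫_D |f(z)|² dA(z) < ∞, one has c ∫_D |f(z)|² dA(z) ≤ S(f) ≤ C ∫_D |f(z)|² dA(z), where S(f) = ∑_{n=0}^∞ (2^n/(2n+1)!) ∫_0^{1/2} x^{2n+1} ( |f^{(n)}(x)|² + |f^{(n)}(1−x)|² + |f^{(n)}(1/2 + i(1/2 − x))|² + |f^{(n)}(1/2 + i(x − 1/2))|² ) dx and f^{(n)} denotes the n-th complex derivative of f. -/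

import Mathlib

open MeasureTheory Set
open scoped ENNReal NNReal

/-- The open square `D` with vertices `0`, `1/2 + i/2`, `1`, `1/2 - i/2`. -/
def SquareD : Set ℂ := {z : ℂ | 0 < z.re ∧ z.re < 1 ∧ |z.im| < min z.re (1 - z.re)}

/-- The two-diagonal (AHS)-type sum of a function `f` holomorphic on `D`. -/
noncomputable def diagSum (f : ℂ → ℂ) : ℝ≥0∞ :=
  ∑' n : ℕ, ENNReal.ofReal ((2 : ℝ) ^ n / (Nat.factorial (2 * n + 1) : ℝ)) *
    ∫⁻ x in Ioo (0 : ℝ) (1 / 2),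
      ENNReal.ofReal (x ^ (2 * n + 1)) *
        ((‖iteratedDeriv n f (x : ℂ)‖₊ : ℝ≥0∞) ^ 2 +
          (‖iteratedDeriv n f (1 - (x : ℂ))‖₊ : ℝ≥0∞) ^ 2 +
          (‖iteratedDeriv n f (1 / 2 + Complex.I * (1 / 2 - (x : ℂ)))‖₊ : ℝ≥0∞) ^ 2 +
          (‖iteratedDeriv n f (1 / 2 + Complex.I * ((x : ℂ) - 1 / 2))‖₊ : ℝ≥0∞) ^ 2) ∂volume



lemma exp_int_orth (m n : ℕ) : ∫ θ in (-Real.pi)..Real.pi,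
    (Complex.exp (θ * Complex.I)) ^ m * (starRingEnd ℂ) ((Complex.exp (θ * Complex.I)) ^ n)
      = if m = n then 2 * (Real.pi : ℂ) else 0 := by
  have h : ∀ θ : ℝ, (Complex.exp (θ * Complex.I)) ^ m *
      (starRingEnd ℂ) ((Complex.exp (θ * Complex.I)) ^ n)
      = Complex.exp ((((m : ℂ) - n) * Complex.I) * θ) := by
    intro θ
    rw [map_pow, ← Complex.exp_conj, ← Complex.exp_nat_mul, ← Complex.exp_nat_mul, ← Complex.exp_add]
    congr 1
    simp
    ring
  simp_rw [h]
  split_ifs with hmn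
  · subst hmn
    simp
    ring
  · have hc : (((m : ℂ) - n) * Complex.I) ≠ 0 := by
      refine mul_ne_zero ?_ Complex.I_ne_zero
      rw [sub_ne_zero]
      exact_mod_cast hmn
    rw [integral_exp_mul_complex hc]
    have : Complex.exp ((((m : ℂ) - n) * Complex.I) * (Real.pi : ℝ)) =
        Complex.exp ((((m : ℂ) - n) * Complex.I) * ((-Real.pi : ℝ))) := by
      rw [Complex.exp_eq_exp_iff_exists_int]
      refine ⟨(m : ℤ) - n, ?_⟩
      push_cast
      ring
    rw [this]
    simp

lemma parseval_aux (a : ℕ → ℂ) (ha : Summable fun n => ‖a n‖) :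
    HasSum (fun n => 2 * Real.pi * ‖a n‖ ^ 2)
      (∫ θ in Ioc (-Real.pi) Real.pi, ‖∑' n, a n * (Complex.exp (θ * Complex.I)) ^ n‖ ^ 2) := by
  set e : ℝ → ℂ := fun θ => Complex.exp (θ * Complex.I) with he
  have hen : ∀ θ, ‖e θ‖ = 1 := fun θ => Complex.norm_exp_ofReal_mul_I θ
  have hec : Continuous e := by fun_prop
  let F : ℕ × ℕ → ℝ → ℂ := fun p θ => (a p.1 * e θ ^ p.1) * (starRingEnd ℂ) (a p.2 * e θ ^ p.2)
  have hFc : ∀ p, Continuous (F p) := by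
    intro p
    have := Complex.continuous_conj
    fun_prop
  have hFn : ∀ p θ, ‖F p θ‖ = ‖a p.1‖ * ‖a p.2‖ := by
    intro p θ; simp [F, hen]
  have hs2 : Summable fun p : ℕ × ℕ => ‖a p.1‖ * ‖a p.2‖ :=
    ha.mul_of_nonneg ha (fun _ => norm_nonneg _) (fun _ => norm_nonneg _)
  have hint : ∀ p, Integrable (F p) (volume.restrict (Ioc (-Real.pi) Real.pi)) := fun p =>
    (hFc p).integrableOn_Ioc
  have key := hasSum_integral_of_summable_integral_norm (F := F) hint (by
    simp only [hFn]
    simpa using hs2.mul_left (2 * Real.pi) |>.congr (fun p => by simp; left; rw [max_eq_left (by linarith [Real.pi_pos])]; ring))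
  have h1 : ∀ p, ∫ θ in Ioc (-Real.pi) Real.pi, F p θ =
      if p.1 = p.2 then ((2 * Real.pi * ‖a p.1‖ ^ 2 : ℝ) : ℂ) else (0 : ℂ) := by
    intro p
    rw [← intervalIntegral.integral_of_le (by linarith [Real.pi_pos])]
    have : ∀ θ, F p θ = (a p.1 * (starRingEnd ℂ) (a p.2)) * (e θ ^ p.1 * (starRingEnd ℂ) (e θ ^ p.2)) := by
      intro θ; simp only [F, map_mul]; ring
    simp_rw [this]
    rw [intervalIntegral.integral_const_mul]
    rw [exp_int_orth]
    split_ifs with h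
    · rw [← h, Complex.mul_conj, Complex.normSq_eq_norm_sq]
      push_cast; ring
    · simp
  have h2 : ∀ θ, ∑' p, F p θ = ((‖∑' n, a n * e θ ^ n‖ ^ 2 : ℝ) : ℂ) := by
    intro θ
    have hs : Summable fun n => ‖a n * e θ ^ n‖ := by simpa [hen] using ha
    have hs' : Summable fun n => ‖(starRingEnd ℂ) (a n * e θ ^ n)‖ := by
      simpa [hen] using ha
    rw [← Complex.normSq_eq_norm_sq, ← Complex.mul_conj, Complex.conj_tsum]
    rw [tsum_mul_tsum_of_summable_norm hs hs']
  simp_rw [h1, h2] at key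
  rw [integral_complex_ofReal] at key
  have inj : Function.Injective (fun n : ℕ => (n, n)) := fun a b h => by simpa using h
  rw [← inj.hasSum_iff] at key
  · simp only [Function.comp_def, if_true] at key
    exact_mod_cast key
  · rintro ⟨m, n⟩ hmn
    have : m ≠ n := by rintro rfl; exact hmn ⟨m, rfl⟩
    simp [this]

lemma parseval_lint (a : ℕ → ℂ) (ha : Summable fun n => ‖a n‖) :
    ∫⁻ θ in Ioo (-Real.pi) Real.pi, (‖∑' n, a n * (Complex.exp (θ * Complex.I)) ^ n‖₊ : ℝ≥0∞) ^ 2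
      = ∑' n, ENNReal.ofReal (2 * Real.pi) * (‖a n‖₊ : ℝ≥0∞) ^ 2 := by
  have key := parseval_aux a ha
  have hc : Continuous fun θ : ℝ => ∑' n, a n * (Complex.exp (θ * Complex.I)) ^ n := by
    refine continuous_tsum (u := fun n => ‖a n‖) (fun n => by fun_prop) ha ?_
    intro n θ
    simp [Complex.norm_exp_ofReal_mul_I]
  rw [setLIntegral_congr Ioo_ae_eq_Ioc]
  have e1 : ∀ z : ℂ, (‖z‖₊ : ℝ≥0∞) ^ 2 = ENNReal.ofReal (‖z‖ ^ 2) := by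
    intro z
    rw [ENNReal.ofReal_pow (norm_nonneg _), ofReal_norm]; rfl
  simp_rw [e1]
  rw [← ofReal_integral_eq_lintegral_ofReal]
  · rw [← key.tsum_eq, ENNReal.ofReal_tsum_of_nonneg _ key.summable]
    · congr 1; ext n
      rw [ENNReal.ofReal_mul (by positivity)]
    · intro n; positivity
  · exact (by fun_prop : Continuous fun θ : ℝ => ‖∑' n, a n * (Complex.exp (θ * Complex.I)) ^ n‖ ^ 2).integrableOn_Ioc
  · exact Filter.Eventually.of_forall fun θ => by positivity

lemma parseval_circle (f : ℂ → ℂ) (p : ℂ) (R ρ : ℝ) (hf : DifferentiableOn ℂ f (Metric.ball p R))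
    (h0 : 0 ≤ ρ) (h1 : ρ < R) :
    ∫⁻ θ in Ioo (-Real.pi) Real.pi, (‖f (ρ * Complex.exp (θ * Complex.I) + p)‖₊ : ℝ≥0∞) ^ 2
      = ∑' n, ENNReal.ofReal (2 * Real.pi * ρ ^ (2 * n) / (Nat.factorial n : ℝ) ^ 2) *
        (‖iteratedDeriv n f p‖₊ : ℝ≥0∞) ^ 2 := by
  let a : ℕ → ℂ := fun n => (Nat.factorial n : ℂ)⁻¹ * ((ρ : ℂ) ^ n * iteratedDeriv n f p)
  have hs : ∀ θ : ℝ, HasSum (fun n => a n * (Complex.exp (θ * Complex.I)) ^ n)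
      (f (ρ * Complex.exp (θ * Complex.I) + p)) := by
    intro θ
    have hz : ρ * Complex.exp (θ * Complex.I) + p ∈ Metric.ball p R := by
      simp [Complex.norm_exp_ofReal_mul_I, abs_of_nonneg h0, h1]
    have := Complex.hasSum_taylorSeries_on_ball hf hz
    have e : (fun n => a n * (Complex.exp (θ * Complex.I)) ^ n) = fun n : ℕ =>
        ((Nat.factorial n : ℂ)⁻¹ • (ρ * Complex.exp (θ * Complex.I) + p - p) ^ n •
          iteratedDeriv n f p : ℂ) := by
      funext n
      simp only [a, smul_eq_mul, add_sub_cancel_right, mul_pow]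
      ring
    rw [e]
    exact this
  have ha : Summable fun n => ‖a n‖ := by
    have := (hs 0).summable.norm
    simpa using this
  have := parseval_lint a ha
  simp_rw [fun θ => (hs θ).tsum_eq] at this
  rw [this]
  congr 1; ext n
  have : (‖a n‖₊ : ℝ≥0∞) = ENNReal.ofReal (ρ ^ n / Nat.factorial n) * (‖iteratedDeriv n f p‖₊ : ℝ≥0∞) := by
    have e1 : ∀ z : ℂ, (‖z‖₊ : ℝ≥0∞) = ENNReal.ofReal ‖z‖ := fun z => by rw [ofReal_norm]; rfl
    rw [e1, e1, ← ENNReal.ofReal_mul (by positivity)]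
    congr 1
    simp [a, abs_of_nonneg h0]
    ring
  rw [this, mul_pow, ← mul_assoc, ← ENNReal.ofReal_pow (by positivity), ← ENNReal.ofReal_mul (by positivity)]
  congr 2
  field_simp
  ring


lemma wallis_half (n : ℕ) : ∫ t in (0:ℝ)..(Real.pi / 2), Real.sin t ^ (2 * n + 1)
    = 4 ^ n * (Nat.factorial n : ℝ) ^ 2 / (Nat.factorial (2 * n + 1) : ℝ) := by
  induction n with
  | zero => simp
  | succ n ih =>
    have : 2 * (n + 1) + 1 = (2 * n + 1) + 2 := by ring
    rw [this, integral_sin_pow, ih]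
    simp only [Real.sin_zero, Real.cos_pi_div_two, Nat.factorial_succ]
    push_cast
    field_simp
    ring

lemma radial_int (x : ℝ) (hx : 0 < x) (n : ℕ) :
    ∫⁻ ρ in Ioo (0:ℝ) (x / √2), ENNReal.ofReal (2 * ρ ^ (2 * n + 1) / √(x ^ 2 - 2 * ρ ^ 2))
      = ENNReal.ofReal (2 ^ n * (Nat.factorial n : ℝ) ^ 2 * x ^ (2 * n + 1) / (Nat.factorial (2 * n + 1) : ℝ)) := by
  have h2 : (0:ℝ) < √2 := by positivity
  have hsq : √2 ^ 2 = (2:ℝ) := Real.sq_sqrt (by norm_num)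
  have himg : (fun t => x / √2 * Real.sin t) '' (Ioo 0 (Real.pi / 2)) = Ioo (0:ℝ) (x / √2) := by
    ext y
    constructor
    · rintro ⟨t, ⟨h0, h1⟩, rfl⟩
      have s0 : 0 < Real.sin t := Real.sin_pos_of_pos_of_lt_pi h0 (by linarith [Real.pi_pos])
      have s1 : Real.sin t < 1 := by
        rw [← Real.sin_pi_div_two]
        exact Real.sin_lt_sin_of_lt_of_le_pi_div_two (by linarith) le_rfl h1
      have : 0 < x / √2 := by positivity
      exact ⟨by positivity, by dsimp only; nlinarith⟩
    · rintro ⟨h0, h1⟩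
      have hq : 0 < x / √2 := by positivity
      refine ⟨Real.arcsin (y / (x / √2)), ⟨?_, ?_⟩, ?_⟩
      · rw [Real.arcsin_pos]; positivity
      · rw [Real.arcsin_lt_pi_div_two, div_lt_one hq]; exact h1
      · dsimp only
        rw [Real.sin_arcsin]
        · field_simp
        · have : 0 < y / (x / √2) := by positivity
          linarith
        · rw [div_le_one hq]; exact h1.le
  have hinj : InjOn (fun t => x / √2 * Real.sin t) (Ioo 0 (Real.pi / 2)) := by
    intro s hs t ht h
    have hq : x / √2 ≠ 0 := by positivity
    have h' : Real.sin s = Real.sin t := mul_left_cancel₀ hq h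
    exact Real.injOn_sin ⟨by linarith [hs.1, Real.pi_pos], hs.2.le⟩ ⟨by linarith [ht.1, Real.pi_pos], ht.2.le⟩ h'
  rw [← himg, lintegral_image_eq_lintegral_abs_deriv_mul measurableSet_Ioo
    (f' := fun t => x / √2 * Real.cos t)
    (fun t _ => ((Real.hasDerivAt_sin t).const_mul _).hasDerivWithinAt) hinj]
  have : ∀ t ∈ Ioo 0 (Real.pi / 2), ENNReal.ofReal |x / √2 * Real.cos t| *
      ENNReal.ofReal (2 * (x / √2 * Real.sin t) ^ (2 * n + 1) / √(x ^ 2 - 2 * (x / √2 * Real.sin t) ^ 2))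
      = ENNReal.ofReal (x ^ (2 * n + 1) / 2 ^ n * Real.sin t ^ (2 * n + 1)) := by
    intro t ht
    have hc : 0 < Real.cos t := Real.cos_pos_of_mem_Ioo ⟨by linarith [ht.1, Real.pi_pos], ht.2⟩
    rw [← ENNReal.ofReal_mul (abs_nonneg _)]
    congr 1
    have e1 : x ^ 2 - 2 * (x / √2 * Real.sin t) ^ 2 = (x * Real.cos t) ^ 2 := by
      rw [mul_pow, mul_pow, div_pow, hsq, Real.cos_sq']
      ring
    rw [e1, Real.sqrt_sq (by positivity), abs_of_pos (by positivity)]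
    have e2 : √2 ^ (2 * n + 1) = 2 ^ n * √2 := by rw [pow_succ, pow_mul, hsq]
    rw [mul_pow, div_pow, e2]
    field_simp
    rw [hsq]
  rw [setLIntegral_congr_fun measurableSet_Ioo this, setLIntegral_congr Ioo_ae_eq_Ioc,
    ← ofReal_integral_eq_lintegral_ofReal]
  · rw [integral_const_mul, ← intervalIntegral.integral_of_le (by positivity), wallis_half]
    congr 1
    have : (4:ℝ) ^ n = 2 ^ n * 2 ^ n := by rw [← mul_pow]; norm_num
    rw [this]
    field_simp
  · exact (by fun_prop : Continuous fun t : ℝ => x ^ (2 * n + 1) / 2 ^ n * Real.sin t ^ (2 * n + 1)).integrableOn_Ioc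
  · refine (ae_restrict_iff' measurableSet_Ioc).2 (Filter.Eventually.of_forall fun t ht => ?_)
    have : 0 ≤ Real.sin t := Real.sin_nonneg_of_nonneg_of_le_pi ht.1.le (by linarith [ht.2, Real.pi_pos])
    simp only [Pi.zero_apply]
    positivity

noncomputable def bk (x s : ℝ) : ℝ≥0∞ := ENNReal.ofReal (1 / (Real.pi * √(x ^ 2 - 2 * s)))

lemma bk_upper (u v : ℝ) : ∫⁻ x : ℝ, bk x ((x - u) ^ 2 + v ^ 2) ≤ 1 := by
  have e : ∀ x : ℝ, x ^ 2 - 2 * ((x - u) ^ 2 + v ^ 2) = 2 * (u ^ 2 - v ^ 2) - (x - 2 * u) ^ 2 := by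
    intro x; ring
  simp only [bk, e]
  rcases le_or_gt (2 * (u ^ 2 - v ^ 2)) 0 with hA | hA
  · have : ∀ x : ℝ, √(2 * (u ^ 2 - v ^ 2) - (x - 2 * u) ^ 2) = 0 := fun x =>
      Real.sqrt_eq_zero_of_nonpos (by nlinarith [sq_nonneg (x - 2 * u)])
    simp [this]
  obtain ⟨a, ha, haA⟩ : ∃ a : ℝ, 0 < a ∧ a ^ 2 = 2 * (u ^ 2 - v ^ 2) :=
    ⟨_, Real.sqrt_pos.2 hA, Real.sq_sqrt hA.le⟩
  rw [← haA]
  have hsupp : Function.support (fun x : ℝ => ENNReal.ofReal (1 / (Real.pi * √(a ^ 2 - (x - 2 * u) ^ 2))))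
      ⊆ (fun t => 2 * u + a * Real.sin t) '' (Ioo (-(Real.pi / 2)) (Real.pi / 2)) := by
    intro x hx
    have : 0 < a ^ 2 - (x - 2 * u) ^ 2 := by
      by_contra h
      apply hx
      simp [Real.sqrt_eq_zero_of_nonpos (not_lt.1 h)]
    obtain ⟨h1, h2⟩ := abs_lt_of_sq_lt_sq' (by linarith : (x - 2 * u) ^ 2 < a ^ 2) ha.le
    have h3 : -1 < (x - 2 * u) / a := by rw [lt_div_iff₀ ha]; linarith
    have h4 : (x - 2 * u) / a < 1 := by rw [div_lt_one ha]; linarith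
    refine ⟨Real.arcsin ((x - 2 * u) / a), ⟨?_, ?_⟩, ?_⟩
    · rwa [Real.neg_pi_div_two_lt_arcsin]
    · rwa [Real.arcsin_lt_pi_div_two]
    · dsimp only
      rw [Real.sin_arcsin h3.le h4.le]
      field_simp
      ring
  rw [← setLIntegral_eq_of_support_subset hsupp]
  have hinj : InjOn (fun t => 2 * u + a * Real.sin t) (Ioo (-(Real.pi / 2)) (Real.pi / 2)) := by
    intro s hs t ht h
    have h' : Real.sin s = Real.sin t := mul_left_cancel₀ ha.ne' (add_left_cancel h)
    exact Real.injOn_sin ⟨hs.1.le, hs.2.le⟩ ⟨ht.1.le, ht.2.le⟩ h'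
  rw [lintegral_image_eq_lintegral_abs_deriv_mul measurableSet_Ioo
    (f' := fun t => a * Real.cos t)
    (fun t _ => (((Real.hasDerivAt_sin t).const_mul _).const_add _).hasDerivWithinAt) hinj]
  have : ∀ t ∈ Ioo (-(Real.pi / 2)) (Real.pi / 2), ENNReal.ofReal |a * Real.cos t| *
      ENNReal.ofReal (1 / (Real.pi * √(a ^ 2 - (2 * u + a * Real.sin t - 2 * u) ^ 2)))
      = ENNReal.ofReal (1 / Real.pi) := by
    intro t ht
    have hc : 0 < Real.cos t := Real.cos_pos_of_mem_Ioo ht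
    rw [← ENNReal.ofReal_mul (abs_nonneg _)]
    congr 1
    have e1 : a ^ 2 - (2 * u + a * Real.sin t - 2 * u) ^ 2 = (a * Real.cos t) ^ 2 := by
      rw [mul_pow, Real.cos_sq']
      ring
    rw [e1, Real.sqrt_sq (by positivity), abs_of_pos (by positivity)]
    field_simp
  rw [setLIntegral_congr_fun measurableSet_Ioo this]
  simp only [lintegral_const, Measure.restrict_apply, MeasurableSet.univ, univ_inter, Real.volume_Ioo]
  rw [← ENNReal.ofReal_mul (by positivity)]
  simp

lemma bk_lower (u v : ℝ) (h1 : |v| < u) (h2 : u ≤ 1 / 2) (h3 : |v| ≤ 1 / 4) :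
    ENNReal.ofReal (1 / (10 * Real.pi)) ≤ ∫⁻ x in Ioo (0:ℝ) (1 / 2), bk x ((x - u) ^ 2 + v ^ 2) := by
  have e : ∀ x : ℝ, x ^ 2 - 2 * ((x - u) ^ 2 + v ^ 2) = 2 * (u ^ 2 - v ^ 2) - (x - 2 * u) ^ 2 := by
    intro x; ring
  simp only [bk, e]
  have hv0 := abs_nonneg v
  have hu : 0 < u := by linarith
  have hvv : v ^ 2 = |v| ^ 2 := (sq_abs v).symm
  have hA : 0 < 2 * (u ^ 2 - v ^ 2) := by rw [hvv]; nlinarith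
  obtain ⟨a, ha, haA⟩ : ∃ a : ℝ, 0 < a ∧ a ^ 2 = 2 * (u ^ 2 - v ^ 2) :=
    ⟨_, Real.sqrt_pos.2 hA, Real.sq_sqrt hA.le⟩
  rw [← haA]
  have hl : 0 ≤ 2 * u - a := by
    have : a < 2 * u := by
      apply lt_of_pow_lt_pow_left₀ 2 (by positivity)
      nlinarith [sq_nonneg v]
    linarith
  have hr : 2 * u - 9 / 10 * a ≤ 1 / 2 := by
    rcases le_or_gt u (1 / 4) with h | h
    · nlinarith
    · have : 2 * u - 1 / 2 ≤ 9 / 10 * a := by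
        refine abs_le_of_sq_le_sq' ?_ (by positivity) |>.2
        have : v ^ 2 ≤ 1 / 16 := by rw [hvv]; nlinarith
        have h4 : 2 * (u - 1 / 4) * (u + 1 / 4) ≤ a ^ 2 := by rw [haA]; nlinarith
        nlinarith
      linarith
  have hsub : Ioo (2 * u - a) (2 * u - 9 / 10 * a) ⊆ Ioo (0:ℝ) (1 / 2) := Ioo_subset_Ioo hl hr
  calc ENNReal.ofReal (1 / (10 * Real.pi)) 
      = ∫⁻ x in Ioo (2 * u - a) (2 * u - 9 / 10 * a), ENNReal.ofReal (1 / (Real.pi * a)) := by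
        simp only [lintegral_const, Measure.restrict_apply, MeasurableSet.univ, univ_inter, Real.volume_Ioo]
        rw [← ENNReal.ofReal_mul (by positivity)]
        congr 1
        field_simp
        ring
    _ ≤ ∫⁻ x in Ioo (2 * u - a) (2 * u - 9 / 10 * a), ENNReal.ofReal (1 / (Real.pi * √(a ^ 2 - (x - 2 * u) ^ 2))) := by
        apply setLIntegral_mono' measurableSet_Ioo
        intro x hx
        apply ENNReal.ofReal_le_ofReal
        have hp : 0 < a ^ 2 - (x - 2 * u) ^ 2 := by
          have := hx.1; have := hx.2
          nlinarith
        have : √(a ^ 2 - (x - 2 * u) ^ 2) ≤ a := by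
          rw [Real.sqrt_le_left ha.le]; nlinarith [sq_nonneg (x - 2 * u)]
        have := Real.sqrt_pos.2 hp
        gcongr
    _ ≤ _ := lintegral_mono_set hsub

attribute [irreducible] bk

lemma bk_measurable {α : Type*} [MeasurableSpace α] {g h : α → ℝ} (hg : Measurable g)
    (hh : Measurable h) : Measurable fun a => bk (g a) (h a) := by
  simp only [bk]
  fun_prop

/-- The single term of the series. -/
@[irreducible] noncomputable def bterm (f : ℂ → ℂ) (n : ℕ) (x : ℝ) (z : ℂ) : ℝ≥0∞ :=
  ENNReal.ofReal ((2 : ℝ) ^ n / (Nat.factorial (2 * n + 1) : ℝ)) *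
      (ENNReal.ofReal (x ^ (2 * n + 1)) * (‖iteratedDeriv n f z‖₊ : ℝ≥0∞) ^ 2)

lemma pointwise_id (f : ℂ → ℂ) (p : ℂ) (x : ℝ) (hx : 0 < x)
    (hf : DifferentiableOn ℂ f (Metric.ball p (x / √2))) (F : ℂ → ℝ≥0∞) (hF : Measurable F)
    (hFf : ∀ w ∈ Metric.ball p (x / √2), F w = (‖f w‖₊ : ℝ≥0∞) ^ 2) :
    ∑' n : ℕ, bterm f n x p
      = ∫⁻ w, F w * bk x (‖w - p‖ ^ 2) := by
  have hsq : √2 ^ 2 = (2:ℝ) := Real.sq_sqrt (by norm_num)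
  have hR : 0 < x / √2 := by positivity
  have hbk : ∀ s : ℝ, Measurable fun q : ℝ × ℝ => bk x (q.1 ^ 2) := fun s =>
    bk_measurable measurable_const (by fun_prop)
  symm
  simp only [bterm]
  rw [← lintegral_add_right_eq_self _ p, ← Complex.lintegral_comp_polarCoord_symm]
  have step1 : ∀ q ∈ polarCoord.target,
      ENNReal.ofReal q.1 • (F (Complex.polarCoord.symm q + p) *
        bk x (‖Complex.polarCoord.symm q + p - p‖ ^ 2))
      = (ENNReal.ofReal q.1 * bk x (q.1 ^ 2)) * F (q.1 * Complex.exp (q.2 * Complex.I) + p) := by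
    intro q hq
    rw [add_sub_cancel_right, Complex.norm_polarCoord_symm, sq_abs, Complex.polarCoord_symm_apply,
      Complex.exp_mul_I, smul_eq_mul, Complex.ofReal_cos, Complex.ofReal_sin]
    ring
  rw [setLIntegral_congr_fun polarCoord.open_target.measurableSet step1, polarCoord_target,
    Measure.volume_eq_prod, ← Measure.prod_restrict, lintegral_prod]
  swap
  · apply Measurable.aemeasurable
    apply Measurable.mul
    · exact Measurable.mul (by fun_prop) (hbk 0)
    · exact hF.comp (by fun_prop)
  simp only
  have hsplit : Ioi (0:ℝ) = Ioo 0 (x / √2) ∪ Ici (x / √2) := (Ioo_union_Ici_eq_Ioi hR).symm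
  rw [hsplit, lintegral_union measurableSet_Ici]
  swap
  · rw [Set.disjoint_left]; intro t ht ht'; exact absurd ht.2 (not_lt.2 ht')
  have hz : ∫⁻ ρ in Ici (x / √2), ∫⁻ θ in Ioo (-Real.pi) Real.pi,
      (ENNReal.ofReal ρ * bk x (ρ ^ 2)) * F (ρ * Complex.exp (θ * Complex.I) + p) = 0 := by
    rw [setLIntegral_congr_fun (g := fun _ => 0) measurableSet_Ici]
    · simp
    intro ρ hρ
    have : bk x (ρ ^ 2) = 0 := by
      have h1 : (x / √2) ^ 2 ≤ ρ ^ 2 := pow_le_pow_left₀ hR.le hρ 2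
      rw [div_pow, hsq] at h1
      unfold bk
      rw [Real.sqrt_eq_zero_of_nonpos (by linarith)]
      simp
    simp [this]
  rw [hz, add_zero]
  have step2 : ∀ ρ ∈ Ioo 0 (x / √2), ∫⁻ θ in Ioo (-Real.pi) Real.pi,
      (ENNReal.ofReal ρ * bk x (ρ ^ 2)) * F (ρ * Complex.exp (θ * Complex.I) + p)
      = ∑' n : ℕ, ENNReal.ofReal (2 * ρ ^ (2 * n + 1) / √(x ^ 2 - 2 * ρ ^ 2)) *
        (ENNReal.ofReal (1 / (Nat.factorial n : ℝ) ^ 2) * (‖iteratedDeriv n f p‖₊ : ℝ≥0∞) ^ 2) := by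
    intro ρ hρ
    rw [lintegral_const_mul]
    swap
    · exact hF.comp (by fun_prop)
    have : ∀ θ : ℝ, F (ρ * Complex.exp (θ * Complex.I) + p)
        = (‖f (ρ * Complex.exp (θ * Complex.I) + p)‖₊ : ℝ≥0∞) ^ 2 := by
      intro θ
      apply hFf
      simp [Complex.norm_exp_ofReal_mul_I, abs_of_pos hρ.1, hρ.2]
    simp_rw [this]
    rw [parseval_circle f p _ ρ hf hρ.1.le hρ.2, ← ENNReal.tsum_mul_left]
    congr 1; ext n
    rw [← mul_assoc, ← mul_assoc]
    congr 1
    unfold bk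
    have h0 := hρ.1
    have h1 : 0 < √(x ^ 2 - 2 * ρ ^ 2) := by
      apply Real.sqrt_pos.2
      have h1 : ρ ^ 2 < (x / √2) ^ 2 := pow_lt_pow_left₀ hρ.2 h0.le (by norm_num)
      rw [div_pow, hsq] at h1
      linarith
    rw [← ENNReal.ofReal_mul (by positivity), ← ENNReal.ofReal_mul (by positivity),
      ← ENNReal.ofReal_mul (by positivity)]
    congr 1
    field_simp
    ring
  rw [setLIntegral_congr_fun measurableSet_Ioo step2, lintegral_tsum]
  swap
  · intro n
    apply Measurable.aemeasurable
    fun_prop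
  congr 1; ext n
  rw [lintegral_mul_const _ (by fun_prop), radial_int x hx n, ← mul_assoc, ← mul_assoc]
  congr 1
  rw [← ENNReal.ofReal_mul (by positivity), ← ENNReal.ofReal_mul (by positivity)]
  congr 1
  field_simp

lemma isOpen_SquareD : IsOpen SquareD := by
  have h1 := Complex.continuous_re
  have h2 := Complex.continuous_im
  refine (isOpen_lt continuous_const h1).inter ((isOpen_lt h1 continuous_const).inter
    (isOpen_lt h2.abs (h1.min (continuous_const.sub h1))))

lemma mem_SquareD_iff (z : ℂ) : z ∈ SquareD ↔ |z.re - 1 / 2| + |z.im| < 1 / 2 := by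
  unfold SquareD
  simp only [mem_ofPred_eq, lt_min_iff]
  constructor
  · rintro ⟨h1, h2, h3, h4⟩
    rcases abs_cases (z.re - 1 / 2) with ⟨h, _⟩ | ⟨h, _⟩ <;> rw [h] <;> linarith
  · intro h
    have := abs_nonneg z.im
    have h5 := neg_abs_le (z.re - 1 / 2)
    have h6 := le_abs_self (z.re - 1 / 2)
    refine ⟨?_, ?_, ?_, ?_⟩ <;> linarith

lemma ball_subset_SquareD (p : ℂ) (x : ℝ) (h : |p.re - 1 / 2| + |p.im| ≤ 1 / 2 - x) :
    Metric.ball p (x / √2) ⊆ SquareD := by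
  intro w hw
  rw [mem_SquareD_iff]
  rw [mem_ball_iff_norm] at hw
  have h2 : (0:ℝ) < √2 := by positivity
  have hsq : √2 ^ 2 = (2:ℝ) := Real.sq_sqrt (by norm_num)
  have e1 : |(w - p).re| + |(w - p).im| ≤ √2 * ‖w - p‖ := by
    refine abs_le_of_sq_le_sq' ?_ (by positivity) |>.2
    rw [mul_pow, hsq, ← Complex.normSq_eq_norm_sq, Complex.normSq_apply]
    nlinarith [sq_nonneg (|(w - p).re| - |(w - p).im|), sq_abs (w - p).re, sq_abs (w - p).im]
  have e2 : √2 * ‖w - p‖ < x := by rwa [lt_div_iff₀ h2, mul_comm] at hw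
  have e3 : |w.re - 1 / 2| ≤ |p.re - 1 / 2| + |(w - p).re| := by
    rw [Complex.sub_re]
    calc |w.re - 1 / 2| = |(p.re - 1 / 2) + (w.re - p.re)| := by ring_nf
      _ ≤ _ := abs_add_le _ _
  have e4 : |w.im| ≤ |p.im| + |(w - p).im| := by
    rw [Complex.sub_im]
    calc |w.im| = |p.im + (w.im - p.im)| := by ring_nf
      _ ≤ _ := abs_add_le _ _
  linarith

lemma iteratedDeriv_contOn (f : ℂ → ℂ) (hf : DifferentiableOn ℂ f SquareD) (n : ℕ) :
    ContinuousOn (iteratedDeriv n f) SquareD := by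
  have : DifferentiableOn ℂ (iteratedDeriv n f) SquareD := by
    induction n with
    | zero => simpa using hf
    | succ n ih => rw [iteratedDeriv_succ]; exact ih.deriv isOpen_SquareD
  exact this.continuousOn

/-- One corner: the sum over one half diagonal as a weighted area integral. -/
lemma corner_id (f : ℂ → ℂ) (hf : DifferentiableOn ℂ f SquareD) (F : ℂ → ℝ≥0∞) (hF : Measurable F)
    (hFf : ∀ w ∈ SquareD, F w = (‖f w‖₊ : ℝ≥0∞) ^ 2) (φ : ℝ → ℂ) (hφ : Continuous φ)
    (hφD : ∀ x ∈ Ioo (0:ℝ) (1 / 2), |(φ x).re - 1 / 2| + |(φ x).im| ≤ 1 / 2 - x) :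
    ∫⁻ x in Ioo (0:ℝ) (1 / 2), ∑' n : ℕ,
      bterm f n x (φ x)
      = ∫⁻ w, F w * ∫⁻ x in Ioo (0:ℝ) (1 / 2), bk x (‖w - φ x‖ ^ 2) := by
  have hm : Measurable fun q : ℝ × ℂ => bk q.1 (‖q.2 - φ q.1‖ ^ 2) :=
    bk_measurable (by fun_prop) (by fun_prop)
  have h1 : ∀ x ∈ Ioo (0:ℝ) (1 / 2), ∑' n : ℕ,
      bterm f n x (φ x)
      = ∫⁻ w, F w * bk x (‖w - φ x‖ ^ 2) := by
    intro x hx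
    have hb := ball_subset_SquareD (φ x) x (hφD x hx)
    exact pointwise_id f (φ x) x hx.1 (hf.mono hb) F hF (fun w hw => hFf w (hb hw))
  rw [setLIntegral_congr_fun measurableSet_Ioo h1, lintegral_lintegral_swap]
  · congr 1; ext w
    rw [lintegral_const_mul]
    exact bk_measurable (by fun_prop) (by fun_prop)
  · apply Measurable.aemeasurable
    exact (hF.comp measurable_snd).mul hm

lemma diagSum_eq (f : ℂ → ℂ) (hf : DifferentiableOn ℂ f SquareD) (F : ℂ → ℝ≥0∞) (hF : Measurable F)
    (hFf : ∀ w ∈ SquareD, F w = (‖f w‖₊ : ℝ≥0∞) ^ 2) :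
    diagSum f = ∫⁻ w, F w *
      ((∫⁻ x in Ioo (0:ℝ) (1 / 2), bk x ((x - w.re) ^ 2 + w.im ^ 2)) +
       (∫⁻ x in Ioo (0:ℝ) (1 / 2), bk x ((x - (1 - w.re)) ^ 2 + w.im ^ 2)) +
       (∫⁻ x in Ioo (0:ℝ) (1 / 2), bk x ((x - (1 / 2 - w.im)) ^ 2 + (w.re - 1 / 2) ^ 2)) +
       (∫⁻ x in Ioo (0:ℝ) (1 / 2), bk x ((x - (1 / 2 + w.im)) ^ 2 + (w.re - 1 / 2) ^ 2))) := by
  let φ₁ : ℝ → ℂ := fun x => (x : ℂ)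
  let φ₂ : ℝ → ℂ := fun x => 1 - (x : ℂ)
  let φ₃ : ℝ → ℂ := fun x => 1 / 2 + Complex.I * (1 / 2 - (x : ℂ))
  let φ₄ : ℝ → ℂ := fun x => 1 / 2 + Complex.I * ((x : ℂ) - 1 / 2)
  have c1 : Continuous φ₁ := by fun_prop
  have c2 : Continuous φ₂ := by fun_prop
  have c3 : Continuous φ₃ := by fun_prop
  have c4 : Continuous φ₄ := by fun_prop
  have d1 : ∀ x ∈ Ioo (0:ℝ) (1 / 2), |(φ₁ x).re - 1 / 2| + |(φ₁ x).im| ≤ 1 / 2 - x := by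
    intro x hx
    have := hx.1; have := hx.2
    simp [φ₁]
    rw [abs_of_nonpos (by linarith)]; linarith
  have d2 : ∀ x ∈ Ioo (0:ℝ) (1 / 2), |(φ₂ x).re - 1 / 2| + |(φ₂ x).im| ≤ 1 / 2 - x := by
    intro x hx
    have := hx.1; have := hx.2
    simp [φ₂]
    rw [abs_of_nonneg (by linarith)]; linarith
  have d3 : ∀ x ∈ Ioo (0:ℝ) (1 / 2), |(φ₃ x).re - 1 / 2| + |(φ₃ x).im| ≤ 1 / 2 - x := by
    intro x hx
    have := hx.1; have := hx.2
    simp [φ₃]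
    rw [abs_of_nonneg (by linarith)]
  have d4 : ∀ x ∈ Ioo (0:ℝ) (1 / 2), |(φ₄ x).re - 1 / 2| + |(φ₄ x).im| ≤ 1 / 2 - x := by
    intro x hx
    have := hx.1; have := hx.2
    simp [φ₄]
    rw [abs_of_nonpos (by linarith)]; linarith
  have e1 : ∀ (w : ℂ) (x : ℝ), ‖w - φ₁ x‖ ^ 2 = (x - w.re) ^ 2 + w.im ^ 2 := by
    intro w x
    rw [← Complex.normSq_eq_norm_sq, Complex.normSq_apply]; simp [φ₁]; ring
  have e2 : ∀ (w : ℂ) (x : ℝ), ‖w - φ₂ x‖ ^ 2 = (x - (1 - w.re)) ^ 2 + w.im ^ 2 := by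
    intro w x
    rw [← Complex.normSq_eq_norm_sq, Complex.normSq_apply]; simp [φ₂]; ring
  have e3 : ∀ (w : ℂ) (x : ℝ), ‖w - φ₃ x‖ ^ 2 = (x - (1 / 2 - w.im)) ^ 2 + (w.re - 1 / 2) ^ 2 := by
    intro w x
    rw [← Complex.normSq_eq_norm_sq, Complex.normSq_apply]; simp [φ₃]; ring
  have e4 : ∀ (w : ℂ) (x : ℝ), ‖w - φ₄ x‖ ^ 2 = (x - (1 / 2 + w.im)) ^ 2 + (w.re - 1 / 2) ^ 2 := by
    intro w x
    rw [← Complex.normSq_eq_norm_sq, Complex.normSq_apply]; simp [φ₄]; ring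
  have k1 := corner_id f hf F hF hFf φ₁ c1 d1
  have k2 := corner_id f hf F hF hFf φ₂ c2 d2
  have k3 := corner_id f hf F hF hFf φ₃ c3 d3
  have k4 := corner_id f hf F hF hFf φ₄ c4 d4
  -- measurability of each term
  have tm : ∀ φ : ℝ → ℂ, Continuous φ →
      (∀ x ∈ Ioo (0:ℝ) (1 / 2), |(φ x).re - 1 / 2| + |(φ x).im| ≤ 1 / 2 - x) → ∀ n : ℕ,
      AEMeasurable (fun x : ℝ => bterm f n x (φ x))
        (volume.restrict (Ioo (0:ℝ) (1 / 2))) := by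
    intro φ hφ hD n
    have hmaps : MapsTo φ (Ioo (0:ℝ) (1 / 2)) SquareD := by
      intro x hx
      rw [mem_SquareD_iff]
      have := hD x hx; have := hx.1; linarith
    have hc : ContinuousOn (fun x => iteratedDeriv n f (φ x)) (Ioo (0:ℝ) (1 / 2)) :=
      (iteratedDeriv_contOn f hf n).comp hφ.continuousOn hmaps
    have := hc.aemeasurable (μ := volume) measurableSet_Ioo
    have h2 : AEMeasurable (fun x : ℝ => ENNReal.ofReal (x ^ (2 * n + 1)))
      (volume.restrict (Ioo (0:ℝ) (1 / 2))) := by fun_prop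
    simp only [bterm]
    exact (h2.mul (this.nnnorm.coe_nnreal_ennreal.pow_const 2)).const_mul _
  have km : ∀ φ : ℝ → ℂ, Continuous φ →
      Measurable fun w : ℂ => F w * ∫⁻ x in Ioo (0:ℝ) (1 / 2), bk x (‖w - φ x‖ ^ 2) := by
    intro φ hφ
    refine hF.mul ?_
    refine Measurable.lintegral_prod_right' (f := fun q : ℂ × ℝ => bk q.2 (‖q.1 - φ q.2‖ ^ 2)) ?_
    exact bk_measurable (by fun_prop) (by fun_prop)
  simp_rw [← e1, ← e2, ← e3, ← e4, mul_add]
  rw [lintegral_add_right _ (km φ₄ c4), lintegral_add_right _ (km φ₃ c3),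
    lintegral_add_right _ (km φ₂ c2), ← k1, ← k2, ← k3, ← k4,
    lintegral_tsum (tm φ₁ c1 d1), lintegral_tsum (tm φ₂ c2 d2),
    lintegral_tsum (tm φ₃ c3 d3), lintegral_tsum (tm φ₄ c4 d4),
    ← ENNReal.tsum_add, ← ENNReal.tsum_add, ← ENNReal.tsum_add]
  unfold diagSum
  congr 1; ext n
  rw [← lintegral_add_right' _ (tm φ₂ c2 d2 n), ← lintegral_add_right' _ (tm φ₃ c3 d3 n),
    ← lintegral_add_right' _ (tm φ₄ c4 d4 n), ← lintegral_const_mul' _ _ ENNReal.ofReal_ne_top]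
  congr 1; ext x
  simp only [φ₁, φ₂, φ₃, φ₄, bterm]
  ring

/-- For functions in the Bergman space of the square `D`, the squared Bergman norm is
comparable to the two-diagonal (AHS)-type sum. -/
theorem bergman_norm_equiv_diagSum :
    ∃ c C : ℝ, 0 < c ∧ 0 < C ∧
      ∀ f : ℂ → ℂ, DifferentiableOn ℂ f SquareD →
        (∫⁻ z in SquareD, (‖f z‖₊ : ℝ≥0∞) ^ 2 ∂volume) < ⊤ →
        ENNReal.ofReal c * ∫⁻ z in SquareD, (‖f z‖₊ : ℝ≥0∞) ^ 2 ∂volume ≤ diagSum f ∧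
          diagSum f ≤ ENNReal.ofReal C * ∫⁻ z in SquareD, (‖f z‖₊ : ℝ≥0∞) ^ 2 ∂volume := by
  refine ⟨1 / (10 * Real.pi), 4, by positivity, by norm_num, ?_⟩
  intro f hf _
  have hDm : MeasurableSet SquareD := isOpen_SquareD.measurableSet
  let F : ℂ → ℝ≥0∞ := SquareD.indicator fun w => (‖f w‖₊ : ℝ≥0∞) ^ 2
  have hF : Measurable F := by
    have hg : Measurable (SquareD.indicator f) := by
      classical
      rw [← Set.piecewise_eq_indicator]
      exact ContinuousOn.measurable_piecewise hf.continuousOn continuousOn_const hDm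
    have : F = fun w => (‖SquareD.indicator f w‖₊ : ℝ≥0∞) ^ 2 := by
      funext w
      by_cases hw : w ∈ SquareD <;> simp [F, hw]
    rw [this]
    fun_prop
  have hFf : ∀ w ∈ SquareD, F w = (‖f w‖₊ : ℝ≥0∞) ^ 2 := fun w hw => indicator_of_mem hw _
  rw [diagSum_eq f hf F hF hFf, ← lintegral_indicator hDm]
  change _ * ∫⁻ w, F w ≤ _ ∧ _ ≤ _ * ∫⁻ w, F w
  rw [← lintegral_const_mul _ hF, ← lintegral_const_mul _ hF]
  constructor
  · apply lintegral_mono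
    intro w
    by_cases hw : w ∈ SquareD
    swap
    · simp [F, hw]
    simp only
    rw [mul_comm]
    gcongr
    obtain ⟨h1, h2, h3⟩ := hw
    obtain ⟨h4, h5⟩ := lt_min_iff.1 h3
    rcases le_or_gt (|w.im|) (1 / 4) with h | h
    · rcases le_or_gt w.re (1 / 2) with hr | hr
      · refine (bk_lower w.re w.im h4 hr h).trans ?_
        rw [add_assoc, add_assoc]; exact le_self_add
      · refine (bk_lower (1 - w.re) w.im h5 (by linarith) h).trans ?_
        rw [add_assoc]
        exact le_add_right le_add_self
    · have h6 : |w.re - 1 / 2| < 1 / 2 - |w.im| := by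
        rw [abs_lt]; constructor <;> linarith
      rcases abs_cases w.im with ⟨h7, _⟩ | ⟨h7, _⟩
      · rw [h7] at h h6
        refine (bk_lower (1 / 2 - w.im) (w.re - 1 / 2) h6 (by linarith) (by linarith)).trans ?_
        exact le_add_right le_add_self
      · rw [h7] at h h6
        refine (bk_lower (1 / 2 + w.im) (w.re - 1 / 2) (by linarith) (by linarith) (by linarith)).trans ?_
        exact le_add_self
  · apply lintegral_mono
    intro w
    simp only
    rw [mul_comm (ENNReal.ofReal 4)]
    gcongr
    have hu : ∀ u v : ℝ, ∫⁻ x in Ioo (0:ℝ) (1 / 2), bk x ((x - u) ^ 2 + v ^ 2) ≤ 1 := fun u v =>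
      (setLIntegral_le_lintegral _ _).trans (bk_upper u v)
    calc _ ≤ (1 + 1 + 1 + 1 : ℝ≥0∞) := by
          gcongr <;> exact hu _ _
      _ = ENNReal.ofReal 4 := by norm_num
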